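/- arXiv:1105.2076 — 4 statements merged into one kernel-verified Lean document; each statement's English description precedes it below -/
import Mathlib

section
/- Let k, l ≥ 1 be integers and let f_1,…,f_k, g_1,…,g_l : [0,1] → ℝ be continuous functions. Define h_1,…,h_{k+l} by h_i := f_i for 1 ≤ i ≤ k and h_{k+i} := g_i for 1 ≤ i ≤ l. Then (∫_{0<t_1<⋯<t_k<1} ∏_{i=1}^{k} f_i(t_i) dt_1⋯dt_k) · (∫_{0<s_1<⋯<s_l<1} ∏_{j=1}^{l} g_j(s_j) ds_1⋯ds_l) = Σ_{σ ∈ Σ_{k,l}} ∫_{0<u_1<⋯<u_{k+l}<1} ∏_{j=1}^{k+l} h_{σ(j)}(u_j) du_1⋯du_{k+l}. -/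
open MeasureTheory

/-- The set of `(k, n−k)`-shuffles: permutations `σ` of `{0,…,n−1}` such that
`σ⁻¹` is increasing on the first `k` letters and on the last `n−k` letters. -/
def shuffles (n k : ℕ) : Finset (Equiv.Perm (Fin n)) :=
  Finset.univ.filter fun σ =>
    (∀ i j : Fin n, (i : ℕ) < (j : ℕ) → (j : ℕ) < k → σ⁻¹ i < σ⁻¹ j) ∧
    (∀ i j : Fin n, (i : ℕ) < (j : ℕ) → k ≤ (i : ℕ) → σ⁻¹ i < σ⁻¹ j)

/-- The open simplex `{0 < t_1 < ⋯ < t_p < 1}` in `ℝ^p`. -/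
def simplex01 (p : ℕ) : Set (Fin p → ℝ) :=
  {t | StrictMono t ∧ ∀ i, t i ∈ Set.Ioo (0 : ℝ) 1}

lemma measurableSet_simplex01 (p : ℕ) : MeasurableSet (simplex01 p) := by
  simp only [simplex01, StrictMono, Set.ofPred_and, Set.ofPred_forall]
  refine .inter (.iInter fun i => .iInter fun j => .iInter fun _ => ?_) (.iInter fun i => ?_)
  · exact measurableSet_lt (measurable_pi_apply i) (measurable_pi_apply j)
  · exact measurable_pi_apply i measurableSet_Ioo

/-- The region `{v | v ∘ σ ∈ simplex01 n}`, on which the coordinates are sorted by `σ`. -/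
def permSimplex {n : ℕ} (σ : Equiv.Perm (Fin n)) : Set (Fin n → ℝ) :=
  {v | v ∘ σ ∈ simplex01 n}

lemma measurableSet_permSimplex {n : ℕ} (σ : Equiv.Perm (Fin n)) :
    MeasurableSet (permSimplex σ) :=
  (measurable_pi_lambda _ fun i => measurable_pi_apply (σ i) :
    Measurable fun v : Fin n → ℝ => v ∘ σ) (measurableSet_simplex01 n)

lemma injective_of_mem_permSimplex {n : ℕ} {σ : Equiv.Perm (Fin n)} {v : Fin n → ℝ}
    (hv : v ∈ permSimplex σ) : Function.Injective v :=
  (Function.Injective.of_comp_iff' v σ.bijective).1 hv.1.injective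

lemma mem_Ioo_of_mem_permSimplex {n : ℕ} {σ : Equiv.Perm (Fin n)} {v : Fin n → ℝ}
    (hv : v ∈ permSimplex σ) (i : Fin n) : v i ∈ Set.Ioo (0 : ℝ) 1 := by
  simpa using hv.2 (σ.symm i)

lemma lt_iff_of_mem_permSimplex {n : ℕ} {σ : Equiv.Perm (Fin n)} {v : Fin n → ℝ}
    (hv : v ∈ permSimplex σ) (i j : Fin n) : v i < v j ↔ σ⁻¹ i < σ⁻¹ j := by
  rw [← hv.1.lt_iff_lt]
  simp

lemma pairwise_disjoint_permSimplex (n : ℕ) :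
    Pairwise (Function.onFun Disjoint (permSimplex (n := n))) := by
  intro σ τ hne
  refine Set.disjoint_left.2 fun v hσ hτ => hne ?_
  have h := Tuple.unique_monotone hσ.1.monotone hτ.1.monotone
  exact Equiv.ext fun i => injective_of_mem_permSimplex hσ (congrFun h i)

/-- The product of two simplices inside `ℝ^(k + l)`. -/
def prodSimplex (k l : ℕ) : Set (Fin (k + l) → ℝ) :=
  {v | (fun i => v (Fin.castAdd l i)) ∈ simplex01 k ∧
    (fun j => v (Fin.natAdd k j)) ∈ simplex01 l}

lemma permSimplex_subset_prodSimplex {k l : ℕ} {σ : Equiv.Perm (Fin (k + l))}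
    (hσ : σ ∈ shuffles (k + l) k) : permSimplex σ ⊆ prodSimplex k l := by
  intro v hv
  simp only [shuffles, Finset.mem_filter, Finset.mem_univ, true_and] at hσ
  refine ⟨⟨fun i j hij => ?_, fun i => mem_Ioo_of_mem_permSimplex hv _⟩,
    ⟨fun i j hij => ?_, fun i => mem_Ioo_of_mem_permSimplex hv _⟩⟩
  · exact (lt_iff_of_mem_permSimplex hv _ _).2 (hσ.1 _ _ (by simpa using hij) (by simp))
  · exact (lt_iff_of_mem_permSimplex hv _ _).2 (hσ.2 _ _ (by simpa using hij) (by simp))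

lemma exists_mem_permSimplex {k l : ℕ} {v : Fin (k + l) → ℝ} (hv : v ∈ prodSimplex k l)
    (hinj : Function.Injective v) : ∃ σ ∈ shuffles (k + l) k, v ∈ permSimplex σ := by
  have hmem : v ∈ permSimplex (Tuple.sort v) := by
    refine ⟨(Tuple.monotone_sort v).strictMono_of_injective
      (hinj.comp (Tuple.sort v).injective), fun i => ?_⟩
    simp only [Function.comp_apply]
    generalize Tuple.sort v i = j
    induction j using Fin.addCases with
    | left j => exact hv.1.2 j
    | right j => exact hv.2.2 j
  refine ⟨Tuple.sort v, ?_, hmem⟩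
  simp only [shuffles, Finset.mem_filter, Finset.mem_univ, true_and,
    ← lt_iff_of_mem_permSimplex hmem]
  constructor
  · intro i j hij hj
    exact hv.1.1 (show (⟨i, hij.trans hj⟩ : Fin k) < ⟨j, hj⟩ from hij)
  · intro i j hij hi
    have h := hv.2.1 (show (⟨i - k, by omega⟩ : Fin l) < ⟨j - k, by omega⟩ by
      simp only [Fin.mk_lt_mk]; omega)
    have hadd : ∀ m : Fin (k + l), ∀ hm : k ≤ m, Fin.natAdd k ⟨m - k, by omega⟩ = m :=
      fun m hm => Fin.ext (Nat.add_sub_cancel' hm)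
    simpa only [hadd i hi, hadd j (hi.trans hij.le)] using h

lemma ae_injective (n : ℕ) : ∀ᵐ v : Fin n → ℝ, Function.Injective v := by
  have h : ∀ i j : Fin n, ∀ᵐ v : Fin n → ℝ, v i = v j → i = j := by
    intro i j
    by_cases hij : i = j
    · simp [hij]
    let L : (Fin n → ℝ) →ₗ[ℝ] ℝ :=
      (LinearMap.proj i : (Fin n → ℝ) →ₗ[ℝ] ℝ) - LinearMap.proj j
    have hL : LinearMap.ker L ≠ ⊤ := by
      intro htop
      have hmem : Pi.single i (1 : ℝ) ∈ LinearMap.ker L := htop ▸ Submodule.mem_top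
      simp [L, Ne.symm hij] at hmem
    refine measure_mono_null (fun v hv => ?_) (Measure.addHaar_submodule volume _ hL)
    have hv' : v i = v j := by
      by_contra hne
      exact hv fun h => absurd h hne
    simp [L, hv']
  filter_upwards [ae_all_iff.2 fun i => ae_all_iff.2 (h i)] with v hv i j using hv i j

lemma prodSimplex_ae_eq (k l : ℕ) :
    prodSimplex k l =ᵐ[volume] ⋃ σ ∈ shuffles (k + l) k, permSimplex σ := by
  filter_upwards [ae_injective (k + l)] with v hinj
  refine propext ⟨fun hv => ?_, fun hv => ?_⟩
  · obtain ⟨σ, hσ, hv'⟩ := exists_mem_permSimplex hv hinj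
    exact Set.mem_biUnion hσ hv'
  · obtain ⟨σ, hσ, hv'⟩ := Set.mem_iUnion₂.1 hv
    exact permSimplex_subset_prodSimplex hσ hv'

lemma setIntegral_permSimplex {n : ℕ} (σ : Equiv.Perm (Fin n)) (h : Fin n → ℝ → ℝ) :
    ∫ v in permSimplex σ, ∏ i, h i (v i) = ∫ u in simplex01 n, ∏ j, h (σ j) (u j) := by
  let e := MeasurableEquiv.piCongrLeft (fun _ : Fin n => ℝ) σ.symm
  have he : ∀ v, e v = v ∘ σ := fun v => by
    ext i
    obtain ⟨j, rfl⟩ := σ.symm.surjective i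
    rw [Function.comp_apply, Equiv.apply_symm_apply]
    exact Equiv.piCongrLeft_apply_apply (fun _ : Fin n => ℝ) σ.symm v j
  have hpre : e ⁻¹' simplex01 n = permSimplex σ := by
    ext v
    simp [he, permSimplex]
  have hpres : MeasurePreserving e volume volume :=
    volume_measurePreserving_piCongrLeft (fun _ => ℝ) σ.symm
  rw [← hpres.setIntegral_preimage_emb e.measurableEmbedding _ (simplex01 n), hpre]
  refine integral_congr_ae (.of_forall fun v => ?_)
  simp only [he, Function.comp_apply]
  exact (Equiv.prod_comp σ fun i => h i (v i)).symm

lemma setIntegral_prodSimplex {k l : ℕ} (f : Fin k → ℝ → ℝ) (g : Fin l → ℝ → ℝ) :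
    ∫ v in prodSimplex k l, ∏ i, Fin.append f g i (v i) =
      (∫ t in simplex01 k, ∏ i, f i (t i)) * ∫ s in simplex01 l, ∏ j, g j (s j) := by
  let e := (MeasurableEquiv.sumPiEquivProdPi fun _ : Fin k ⊕ Fin l => ℝ).symm.trans
    (MeasurableEquiv.piCongrLeft (fun _ : Fin (k + l) => ℝ) finSumFinEquiv)
  have hpres : MeasurePreserving e volume volume :=
    (volume_measurePreserving_sumPiEquivProdPi_symm fun _ : Fin k ⊕ Fin l => ℝ).trans
      (volume_measurePreserving_piCongrLeft (fun _ => ℝ) finSumFinEquiv)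
  have hl : ∀ p i, e p (Fin.castAdd l i) = p.1 i := fun p i =>
    Equiv.piCongrLeft_apply_apply (fun _ : Fin (k + l) => ℝ) finSumFinEquiv _ (Sum.inl i)
  have hr : ∀ p j, e p (Fin.natAdd k j) = p.2 j := fun p j =>
    Equiv.piCongrLeft_apply_apply (fun _ : Fin (k + l) => ℝ) finSumFinEquiv _ (Sum.inr j)
  have hpre : e ⁻¹' prodSimplex k l = simplex01 k ×ˢ simplex01 l := by
    ext p
    simp [prodSimplex, hl, hr]
  rw [← hpres.setIntegral_preimage_emb e.measurableEmbedding, hpre]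
  simp only [Fin.prod_univ_add, Fin.append_left, Fin.append_right, hl, hr]
  exact setIntegral_prod_mul (fun t : Fin k → ℝ => ∏ i, f i (t i))
    (fun s : Fin l → ℝ => ∏ j, g j (s j)) _ _

lemma integrableOn_permSimplex {n : ℕ} (σ : Equiv.Perm (Fin n)) {h : Fin n → ℝ → ℝ}
    (hh : ∀ i, ContinuousOn (h i) (Set.Icc 0 1)) :
    IntegrableOn (fun v : Fin n → ℝ => ∏ i, h i (v i)) (permSimplex σ) := by
  have hcont : ContinuousOn (fun v : Fin n → ℝ => ∏ i, h i (v i))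
      (Set.univ.pi fun _ => Set.Icc 0 1) :=
    continuousOn_finsetProd _ fun i _ =>
      (hh i).comp (continuous_apply i).continuousOn fun v hv => hv i trivial
  refine (hcont.integrableOn_compact (isCompact_univ_pi fun _ => isCompact_Icc)).mono_set ?_
  exact fun v hv i _ => Set.Ioo_subset_Icc_self (mem_Ioo_of_mem_permSimplex hv i)

/-- The shuffle product formula for iterated integrals of continuous functions. -/
theorem stmt10 (k l : ℕ) (hk : 1 ≤ k) (hl : 1 ≤ l)
    (f : Fin k → ℝ → ℝ) (g : Fin l → ℝ → ℝ)
    (hf : ∀ i, ContinuousOn (f i) (Set.Icc 0 1))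
    (hg : ∀ j, ContinuousOn (g j) (Set.Icc 0 1)) :
    (∫ t in simplex01 k, ∏ i, f i (t i)) * (∫ s in simplex01 l, ∏ j, g j (s j)) =
      ∑ σ ∈ shuffles (k + l) k,
        ∫ u in simplex01 (k + l), ∏ j, Fin.append f g (σ j) (u j) := by
  have hh : ∀ i, ContinuousOn (Fin.append f g i) (Set.Icc 0 1) := by
    intro i
    induction i using Fin.addCases with
    | left i => simpa using hf i
    | right j => simpa using hg j
  rw [← setIntegral_prodSimplex, setIntegral_congr_set (prodSimplex_ae_eq k l),
    integral_biUnion_finset _ (fun σ _ => measurableSet_permSimplex σ)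
      ((pairwise_disjoint_permSimplex _).set_pairwise _)
      (fun σ _ => integrableOn_permSimplex σ hh)]
  exact Finset.sum_congr rfl fun σ _ => setIntegral_permSimplex σ _
end

section
/- Let m ≥ 1 be an integer, X a set, and a_1,…,a_m elements of X. In the free abelian group on the set of m-tuples of elements of X, the following identity holds: Σ_{k=0}^{m} (−1)^k Σ_{σ ∈ Σ_{k,m−k}} (b^{(k)}_{σ(1)}, …, b^{(k)}_{σ(m)}) = 0, where for each k the tuple (b^{(k)}_1,…,b^{(k)}_m) := (a_k, a_{k−1}, …, a_1, a_{k+1}, a_{k+2}, …, a_m) is obtained from (a_1,…,a_m) by reversing the first k entries. -/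
theorem sub_one_sub_lt {m k : ℕ} (hk : k ≤ m) (i : Fin m) (h : (i : ℕ) < k) :
    k - 1 - (i : ℕ) < m := by
  omega

/-- The permutation of `{0,…,m−1}` reversing the first `k` elements. -/
def reversePrefix {m k : ℕ} (hk : k ≤ m) : Equiv.Perm (Fin m) :=
  Function.Involutive.toPerm
    (fun i => if h : (i : ℕ) < k then ⟨k - 1 - (i : ℕ), sub_one_sub_lt hk i h⟩ else i)
    (by
      intro i
      by_cases h : (i : ℕ) < k
      · have h' : k - 1 - (i : ℕ) < k := by omega
        simp only [h, dite_true, h', Fin.ext_iff]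
        omega
      · simp [h])

theorem reversePrefix_apply {m k : ℕ} (hk : k ≤ m) (i : Fin m) :
    reversePrefix hk i = if h : (i : ℕ) < k then ⟨k - 1 - (i : ℕ), sub_one_sub_lt hk i h⟩ else i := rfl

theorem reversePrefix_inv {m k : ℕ} (hk : k ≤ m) :
    (reversePrefix hk)⁻¹ = reversePrefix hk := rfl

theorem reversePrefix_of_lt {m k : ℕ} (hk : k ≤ m) {i : Fin m} (h : (i : ℕ) < k) :
    (reversePrefix hk i : ℕ) = k - 1 - i := by
  simp [reversePrefix_apply, h]

theorem reversePrefix_of_le {m k : ℕ} (hk : k ≤ m) {i : Fin m} (h : k ≤ (i : ℕ)) :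
    reversePrefix hk i = i := by
  simp [reversePrefix_apply, h]

/-- Permutations whose inverse decreases on the first `k` letters and increases from the
letter `l` on. -/
def valleys (m k l : ℕ) : Finset (Equiv.Perm (Fin m)) :=
  Finset.univ.filter fun τ =>
    (∀ i j : Fin m, (i : ℕ) < (j : ℕ) → (j : ℕ) < k → τ⁻¹ j < τ⁻¹ i) ∧
    (∀ i j : Fin m, (i : ℕ) < (j : ℕ) → l ≤ (i : ℕ) → τ⁻¹ i < τ⁻¹ j)

theorem mem_shuffles_iff_reversePrefix_mul_mem_valleys {m k : ℕ} (hk : k ≤ m)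
    (σ : Equiv.Perm (Fin m)) :
    σ ∈ shuffles m k ↔ reversePrefix hk * σ ∈ valleys m k k := by
  simp only [shuffles, valleys, Finset.mem_filter, Finset.mem_univ, true_and, mul_inv_rev,
    reversePrefix_inv, Equiv.Perm.mul_apply]
  refine and_congr ⟨fun h i j hij hj => ?_, fun h i j hij hj => ?_⟩
    (forall_congr' fun i => forall_congr' fun j => forall_congr' fun hij =>
      forall_congr' fun hi => ?_)
  · apply h
    · rw [reversePrefix_of_lt hk hj, reversePrefix_of_lt hk (hij.trans hj)]
      omega
    · rw [reversePrefix_of_lt hk (hij.trans hj)]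
      omega
  · have hi := reversePrefix_of_lt hk (hij.trans hj)
    have hj' := reversePrefix_of_lt hk hj
    have key := h (reversePrefix hk j) (reversePrefix hk i) (by omega) (by omega)
    have hinv : ∀ x, reversePrefix hk (reversePrefix hk x) = x :=
      (reversePrefix hk).symm_apply_apply
    rwa [hinv, hinv] at key
  · rw [reversePrefix_of_le hk hi, reversePrefix_of_le hk (hi.trans hij.le)]

/-- Permutations whose inverse has its valley at the `k`-th letter (counted from one). -/
def valleysAt (m k : ℕ) : Finset (Equiv.Perm (Fin m)) :=
  if 1 ≤ k ∧ k ≤ m then valleys m k (k - 1) else ∅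

theorem mem_valleysAt {m k : ℕ} {τ : Equiv.Perm (Fin m)} :
    τ ∈ valleysAt m k ↔ (1 ≤ k ∧ k ≤ m) ∧ τ ∈ valleys m k (k - 1) := by
  unfold valleysAt
  split_ifs with h <;> simp [h]

theorem disjoint_valleysAt_succ (m k : ℕ) :
    Disjoint (valleysAt m k) (valleysAt m (k + 1)) := by
  rw [Finset.disjoint_left]
  intro τ h₁ h₂
  simp only [mem_valleysAt, valleys, Finset.mem_filter, Finset.mem_univ, true_and] at h₁ h₂
  obtain ⟨⟨hk, -⟩, -, inc⟩ := h₁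
  obtain ⟨⟨-, hkm⟩, dec, -⟩ := h₂
  exact lt_asymm
    (inc ⟨k - 1, by omega⟩ ⟨k, by omega⟩ (by simp only; omega) le_rfl)
    (dec ⟨k - 1, by omega⟩ ⟨k, by omega⟩ (by simp only; omega) (by simp))

theorem valleys_eq_union {m k : ℕ} (hm : 1 ≤ m) (hk : k ≤ m) :
    valleys m k k = valleysAt m k ∪ valleysAt m (k + 1) := by
  ext τ
  simp only [Finset.mem_union, mem_valleysAt, valleys, Finset.mem_filter, Finset.mem_univ,
    true_and, Nat.add_sub_cancel]
  constructor
  · rintro ⟨dec, inc⟩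
    rcases Nat.eq_zero_or_pos k with rfl | hk0
    · exact Or.inr ⟨by omega, fun i j _ _ => by omega, inc⟩
    rcases hk.eq_or_lt with rfl | hkm
    · exact Or.inl ⟨by omega, dec, fun i j _ _ => by omega⟩
    have hne : τ⁻¹ ⟨k - 1, by omega⟩ ≠ τ⁻¹ ⟨k, hkm⟩ := by
      simp only [ne_eq, EmbeddingLike.apply_eq_iff_eq, Fin.mk.injEq]
      omega
    rcases hne.lt_or_gt with hlt | hgt
    · refine Or.inl ⟨by omega, dec, fun i j hij hi => ?_⟩
      rcases hi.eq_or_lt with hi | hi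
      · have hi : i = ⟨k - 1, by omega⟩ := Fin.ext hi.symm
        rw [← hi] at hlt
        rcases (show k ≤ (j : ℕ) by omega).eq_or_lt with hj | hj
        · obtain rfl : j = ⟨k, hkm⟩ := Fin.ext hj.symm
          exact hlt
        · exact hlt.trans (inc _ _ hj le_rfl)
      · exact inc i j hij (by omega)
    · refine Or.inr ⟨by omega, fun i j hij hj => ?_, inc⟩
      rcases (Nat.lt_succ_iff.mp hj).eq_or_lt with hj | hj
      · obtain rfl : j = ⟨k, hkm⟩ := Fin.ext hj
        rcases (show (i : ℕ) ≤ k - 1 by simp only at hij; omega).eq_or_lt with hi | hi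
        · have hi : i = ⟨k - 1, by omega⟩ := Fin.ext hi
          rwa [← hi] at hgt
        · exact hgt.trans (dec _ _ hi (by simp only; omega))
      · exact dec i j hij hj
  · rintro (⟨-, dec, inc⟩ | ⟨-, dec, inc⟩)
    · exact ⟨dec, fun i j hij hi => inc i j hij (by omega)⟩
    · exact ⟨fun i j hij hj => dec i j hij (by omega), inc⟩

theorem sum_range_neg_one_pow_smul_add_succ {G : Type*} [AddCommGroup G] (u : ℕ → G) (n : ℕ) :
    ∑ k ∈ Finset.range n, (-1 : ℤ) ^ k • (u k + u (k + 1)) = u 0 - (-1 : ℤ) ^ n • u n := by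
  induction n with
  | zero => simp
  | succ n ih =>
    rw [Finset.sum_range_succ, ih, pow_succ]
    module

/-- In the free abelian group on `m`-tuples of elements of `X`:
`Σ_{k=0}^{m} (−1)^k Σ_{σ ∈ Σ_{k,m−k}} (b^{(k)}_{σ(1)},…,b^{(k)}_{σ(m)}) = 0`,
where `b^{(k)}` is obtained from `(a_1,…,a_m)` by reversing the first `k` entries. -/
theorem stmt11 (m : ℕ) (hm : 1 ≤ m) (X : Type*) (a : Fin m → X)
    (b : ℕ → Fin m → X)
    (hb : ∀ k : ℕ, ∀ _hk : k ≤ m, ∀ i : Fin m,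
      b k i = if h : (i : ℕ) < k then a ⟨k - 1 - (i : ℕ), by omega⟩ else a i) :
    ∑ k ∈ Finset.range (m + 1), (-1 : ℤ) ^ k •
        ∑ σ ∈ shuffles m k, FreeAbelianGroup.of (fun i => b k (σ i)) = 0 := by
  let u : ℕ → FreeAbelianGroup (Fin m → X) := fun k =>
    ∑ τ ∈ valleysAt m k, FreeAbelianGroup.of (fun i => a (τ i))
  have split : ∀ k ∈ Finset.range (m + 1),
      (-1 : ℤ) ^ k • ∑ σ ∈ shuffles m k, FreeAbelianGroup.of (fun i => b k (σ i)) =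
        (-1 : ℤ) ^ k • (u k + u (k + 1)) := by
    intro k hk
    have hkm : k ≤ m := Nat.lt_succ_iff.mp (Finset.mem_range.mp hk)
    rw [← Finset.sum_union (disjoint_valleysAt_succ m k), ← valleys_eq_union hm hkm]
    congr 1
    refine Finset.sum_equiv (Equiv.mulLeft (reversePrefix hkm))
      (mem_shuffles_iff_reversePrefix_mul_mem_valleys hkm) fun σ _ => ?_
    congr 1
    funext i
    rw [hb k hkm, Equiv.coe_mulLeft, Equiv.Perm.mul_apply, reversePrefix_apply, apply_dite a]
  rw [Finset.sum_congr rfl split, sum_range_neg_one_pow_smul_add_succ]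
  simp [u, valleysAt]
end

section
/- For ε ∈ (0,1) let Li_{1,1}(1−ε, 1−ε) := Σ_{0<k<l} (1−ε)^{k+l}/(k·l) (an absolutely convergent series). Then lim_{ε→0⁺} ( Li_{1,1}(1−ε, 1−ε) − (log ε)²/2 ) = −π²/12. -/
open Filter

/-- `Li_{1,1}(x,x) = Σ_{0<k<l} x^{k+l}/(kl)` for `0 < x < 1`. -/
noncomputable def Li11 (x : ℝ) : ℝ :=
  ∑' q : {q : ℕ × ℕ // 0 < q.1 ∧ q.1 < q.2}, x ^ (q.1.1 + q.1.2) / (q.1.1 * q.1.2)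

/-- The square of an absolutely convergent series splits into its diagonal and twice its strictly
upper triangular part. -/
theorem tsum_sq_eq_diagonal_add_two_mul_lt {a : ℕ → ℝ} (ha : Summable fun n => ‖a n‖) :
    (∑' n, a n) ^ 2 = ∑' n, a n ^ 2 +
      2 * ∑' q : ℕ × ℕ, {q : ℕ × ℕ | q.1 < q.2}.indicator (fun q => a q.1 * a q.2) q := by
  have hF : Summable fun q : ℕ × ℕ => a q.1 * a q.2 := summable_mul_of_summable_norm ha ha
  have hdiag : ∑' q : ℕ × ℕ, {q : ℕ × ℕ | q.1 = q.2}.indicator (fun q => a q.1 * a q.2) q =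
      ∑' n, a n ^ 2 := by
    have hinj : Function.Injective fun n : ℕ => (n, n) := fun m n h => (Prod.ext_iff.1 h).1
    rw [← hinj.tsum_eq]
    · simp [sq]
    · rintro ⟨m, n⟩ h
      have hmn : (m, n) ∈ {q : ℕ × ℕ | q.1 = q.2} := Set.mem_of_indicator_ne_zero h
      exact ⟨m, Prod.ext rfl hmn⟩
  have hgt : ∑' q : ℕ × ℕ, {q : ℕ × ℕ | q.2 < q.1}.indicator (fun q => a q.1 * a q.2) q =
      ∑' q : ℕ × ℕ, {q : ℕ × ℕ | q.1 < q.2}.indicator (fun q => a q.1 * a q.2) q := by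
    rw [← (Equiv.prodComm ℕ ℕ).tsum_eq]
    simp [Set.indicator_apply, mul_comm]
  have hsplit : ∀ q : ℕ × ℕ, a q.1 * a q.2 =
      {q : ℕ × ℕ | q.1 = q.2}.indicator (fun q => a q.1 * a q.2) q +
      ({q : ℕ × ℕ | q.1 < q.2}.indicator (fun q => a q.1 * a q.2) q +
      {q : ℕ × ℕ | q.2 < q.1}.indicator (fun q => a q.1 * a q.2) q) := by
    rintro ⟨m, n⟩
    rcases lt_trichotomy m n with h | h | h
    · simp [h, h.ne, h.not_gt]
    · simp [h]
    · simp [h, h.ne', h.not_gt]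
  rw [sq, tsum_mul_tsum_of_summable_norm ha ha, tsum_congr hsplit,
    (hF.indicator _).tsum_add ((hF.indicator _).add (hF.indicator _)),
    (hF.indicator _).tsum_add (hF.indicator _), hdiag, hgt, two_mul]

theorem hasSum_pow_div_neg_log {x : ℝ} (hx : |x| < 1) :
    HasSum (fun n : ℕ => x ^ n / n) (-Real.log (1 - x)) := by
  rw [← hasSum_nat_add_iff' 1]
  simpa using Real.hasSum_pow_div_log_of_abs_lt_one hx

theorem Li11_eq_log_sq_sub_tsum {x : ℝ} (hx : |x| < 1) :
    Li11 x = Real.log (1 - x) ^ 2 / 2 - (∑' n : ℕ, (x ^ n / n) ^ 2) / 2 := by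
  have hnorm : Summable fun n : ℕ => ‖x ^ n / (n : ℝ)‖ := by
    simpa using (hasSum_pow_div_neg_log (x := |x|) (by simpa using hx)).summable
  have hLi : Li11 x = ∑' q : ℕ × ℕ,
      {q : ℕ × ℕ | q.1 < q.2}.indicator (fun q => x ^ q.1 / q.1 * (x ^ q.2 / q.2)) q := by
    unfold Li11
    refine (tsum_subtype {q : ℕ × ℕ | 0 < q.1 ∧ q.1 < q.2}
      fun q => x ^ (q.1 + q.2) / ((q.1 : ℝ) * q.2)).trans (tsum_congr ?_)
    rintro ⟨m, n⟩
    rcases m.eq_zero_or_pos with rfl | hm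
    · simp [Set.indicator_apply]
    · simp [Set.indicator_apply, hm, pow_add, div_mul_div_comm]
  have h := tsum_sq_eq_diagonal_add_two_mul_lt hnorm
  rw [← hLi, (hasSum_pow_div_neg_log hx).tsum_eq] at h
  linarith

theorem tendsto_tsum_pow_div_sq :
    Tendsto (fun ε : ℝ => ∑' n : ℕ, ((1 - ε) ^ n / (n : ℝ)) ^ 2)
      (nhdsWithin 0 (Set.Ioi 0)) (nhds (Real.pi ^ 2 / 6)) := by
  rw [← hasSum_zeta_two.tsum_eq]
  refine tendsto_tsum_of_dominated_convergence hasSum_zeta_two.summable (fun n => ?_) ?_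
  · have hc : Continuous fun ε : ℝ => ((1 - ε) ^ n / (n : ℝ)) ^ 2 := by fun_prop
    simpa using (hc.tendsto 0).mono_left nhdsWithin_le_nhds
  · filter_upwards [Ioo_mem_nhdsGT (zero_lt_one' ℝ)] with ε hε n
    have h0 : 0 ≤ 1 - ε := by linarith [hε.2]
    have h1 : 1 - ε ≤ 1 := by linarith [hε.1]
    rw [Real.norm_of_nonneg (sq_nonneg _), div_pow]
    gcongr
    exact pow_le_one₀ (pow_nonneg h0 n) (pow_le_one₀ h0 h1)

/-- `lim_{ε→0⁺} ( Li_{1,1}(1−ε,1−ε) − (log ε)²/2 ) = −π²/12`. -/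
theorem stmt13 :
    Tendsto (fun ε : ℝ => Li11 (1 - ε) - (Real.log ε) ^ 2 / 2)
      (nhdsWithin 0 (Set.Ioi 0)) (nhds (-(Real.pi ^ 2 / 12))) := by
  have h := (tendsto_tsum_pow_div_sq.div_const 2).neg
  rw [show Real.pi ^ 2 / 6 / 2 = Real.pi ^ 2 / 12 by ring] at h
  refine h.congr' ?_
  filter_upwards [Ioo_mem_nhdsGT (zero_lt_one' ℝ)] with ε hε
  rw [Li11_eq_log_sq_sub_tsum (abs_lt.2 ⟨by linarith [hε.2], by linarith [hε.1]⟩),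
    sub_sub_cancel]
  ring
end

section
/- Let m ≥ 1 and n_1,…,n_m ≥ 1 be integers with n_m ≥ 2, and set w := n_1+⋯+n_m. For j = 1,…,w define f_j : ℝ → ℝ by f_j(t) = 1/(1−t) if j = n_1+⋯+n_{i−1}+1 for some i ∈ {1,…,m}, and f_j(t) = 1/t otherwise. Then the integrand ∏_{j=1}^{w} f_j(t_j) is integrable on the open simplex {0 < t_1 < ⋯ < t_w < 1} ⊂ ℝ^w and ζ(n_1,…,n_m) = ∫_{0<t_1<⋯<t_w<1} ∏_{j=1}^{w} f_j(t_j) dt_1⋯dt_w. -/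
open MeasureTheory

/-- The multiple zeta value `ζ(n_1,…,n_m) = Σ_{0<k_1<⋯<k_m} 1/(k_1^{n_1}⋯k_m^{n_m})`. -/
noncomputable def mzv (p : ℕ) (n : Fin p → ℕ) : ℝ :=
  ∑' k : {k : Fin p → ℕ // StrictMono k ∧ ∀ i, 0 < k i},
    ∏ i, (((k.1 i : ℝ)) ^ (n i))⁻¹

open scoped ENNReal

/-- The strictly increasing `w`-tuples with entries in `I`. -/
def increasingTuples {α : Type*} [Preorder α] (w : ℕ) (I : Set α) : Set (Fin w → α) :=
  {t | StrictMono t ∧ ∀ j, t j ∈ I}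

/-- The weight `∏ j, g j (t j)` of a tuple `t`, set to zero unless `t` is strictly increasing with
entries in `I`. -/
noncomputable def tupleWeight {α : Type*} [Preorder α] (g : ℕ → α → ℝ≥0∞) (w : ℕ) (I : Set α) :
    (Fin w → α) → ℝ≥0∞ :=
  (increasingTuples w I).indicator fun t => ∏ j : Fin w, g j (t j)

theorem snoc_mem_increasingTuples_iff {α : Type*} [Preorder α] {w : ℕ} {I : Set α}
    {t : Fin w → α} {u : α} :
    (Fin.snoc t u : Fin (w + 1) → α) ∈ increasingTuples (w + 1) I ↔
      u ∈ I ∧ t ∈ increasingTuples w (I ∩ Set.Iio u) := by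
  simp only [increasingTuples, Set.mem_ofPred_eq, Fin.forall_fin_succ', Fin.snoc_castSucc,
    Fin.snoc_last, Set.mem_inter_iff, Set.mem_Iio]
  constructor
  · rintro ⟨hs, ht, hu⟩
    refine ⟨hu, fun i j hij => ?_, fun j => ⟨ht j, ?_⟩⟩
    · simpa using hs (Fin.castSucc_lt_castSucc_iff.2 hij)
    · simpa using hs (Fin.castSucc_lt_last j)
  · rintro ⟨hu, hs, ht⟩
    refine ⟨fun i j hij => ?_, fun j => (ht j).1, hu⟩
    induction j using Fin.lastCases with
    | last =>
      obtain ⟨i, rfl⟩ := Fin.exists_castSucc_eq.2 hij.ne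
      simpa using (ht i).2
    | cast j =>
      obtain ⟨i, rfl⟩ := Fin.exists_castSucc_eq.2 (hij.trans (Fin.castSucc_lt_last j)).ne
      simpa using hs (Fin.castSucc_lt_castSucc_iff.1 hij)

theorem tupleWeight_snoc {α : Type*} [Preorder α] (g : ℕ → α → ℝ≥0∞) {w : ℕ} (I : Set α)
    (t : Fin w → α) (u : α) :
    tupleWeight g (w + 1) I (Fin.snoc t u : Fin (w + 1) → α) =
      I.indicator (g w) u * tupleWeight g w (I ∩ Set.Iio u) t := by
  classical
  simp only [tupleWeight, Set.indicator_apply, snoc_mem_increasingTuples_iff,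
    Fin.prod_univ_castSucc, Fin.snoc_castSucc, Fin.snoc_last, Fin.val_castSucc, Fin.val_last]
  by_cases hu : u ∈ I <;> by_cases ht : t ∈ increasingTuples w (I ∩ Set.Iio u) <;>
    simp [hu, ht, mul_comm]

theorem tupleWeight_zero {α : Type*} [Preorder α] (g : ℕ → α → ℝ≥0∞) (I : Set α)
    (t : Fin 0 → α) : tupleWeight g 0 I t = 1 := by
  rw [tupleWeight, Set.indicator_of_mem]
  · simp
  · exact ⟨fun i => i.elim0, fun i => i.elim0⟩

/-- Summing out the last coordinate of a tuple. -/
theorem ENNReal.tsum_fin_succ_fun {α : Type*} {m : ℕ} (F : (Fin (m + 1) → α) → ℝ≥0∞) :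
    ∑' k, F k = ∑' j, ∑' k : Fin m → α, F (Fin.snoc k j : Fin (m + 1) → α) := by
  rw [← (Fin.snocEquiv fun _ => α).tsum_eq, ENNReal.tsum_prod']
  rfl

theorem tsum_tupleWeight_succ (g : ℕ → ℕ → ℝ≥0∞) (m : ℕ) (I : Set ℕ) :
    ∑' k, tupleWeight g (m + 1) I k =
      ∑' j, I.indicator (g m) j * ∑' k, tupleWeight g m (I ∩ Set.Iio j) k := by
  simp_rw [ENNReal.tsum_fin_succ_fun, tupleWeight_snoc, ENNReal.tsum_mul_left]

theorem measurableSet_increasingTuples (w : ℕ) {I : Set ℝ} (hI : MeasurableSet I) :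
    MeasurableSet (increasingTuples w I) := by
  have : increasingTuples w I =
      (⋂ i, ⋂ j, ⋂ _ : i < j, {t : Fin w → ℝ | t i < t j}) ∩ ⋂ j, {t | t j ∈ I} := by
    ext t
    simp [increasingTuples, StrictMono]
  rw [this]
  refine .inter (.iInter fun i => .iInter fun j => .iInter fun _ => ?_) (.iInter fun j => ?_)
  · exact measurableSet_lt (measurable_pi_apply i) (measurable_pi_apply j)
  · exact measurable_pi_apply j hI

theorem measurable_tupleWeight {g : ℕ → ℝ → ℝ≥0∞} (hg : ∀ j, Measurable (g j)) (w : ℕ)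
    {I : Set ℝ} (hI : MeasurableSet I) : Measurable (tupleWeight g w I) :=
  (Finset.measurable_fun_prod _ fun (j : Fin w) _ =>
    (hg j).comp (measurable_pi_apply j)).indicator
    (measurableSet_increasingTuples w hI)

/-- Integrating out the last coordinate of a tuple. -/
theorem lintegral_fin_succ_fun {w : ℕ} {F : (Fin (w + 1) → ℝ) → ℝ≥0∞} (hF : Measurable F) :
    ∫⁻ t, F t = ∫⁻ u, ∫⁻ t : Fin w → ℝ, F (Fin.snoc t u : Fin (w + 1) → ℝ) := by
  have e := (volume_preserving_piFinSuccAbove (fun _ : Fin (w + 1) => ℝ) (Fin.last w)).symm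
  rw [← e.lintegral_comp hF, Measure.volume_eq_prod, lintegral_prod]
  · simp [Fin.insertNthEquiv, Fin.insertNth_last']
  · exact (hF.comp (MeasurableEquiv.measurable _)).aemeasurable

theorem lintegral_tupleWeight_succ {g : ℕ → ℝ → ℝ≥0∞} (hg : ∀ j, Measurable (g j)) (w : ℕ)
    {I : Set ℝ} (hI : MeasurableSet I) :
    ∫⁻ t, tupleWeight g (w + 1) I t =
      ∫⁻ u in I, g w u * ∫⁻ t, tupleWeight g w (I ∩ Set.Iio u) t := by
  rw [lintegral_fin_succ_fun (measurable_tupleWeight hg _ hI), ← lintegral_indicator hI]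
  refine lintegral_congr fun u => ?_
  simp_rw [tupleWeight_snoc]
  rw [lintegral_const_mul _ (measurable_tupleWeight hg _ (hI.inter measurableSet_Iio))]
  by_cases hu : u ∈ I <;> simp [hu]

theorem Ioo_inter_Iio_of_mem {α : Type*} [Preorder α] {a x u : α} (hu : u ∈ Set.Ioo a x) :
    Set.Ioo a x ∩ Set.Iio u = Set.Ioo a u := by
  ext v
  simp only [Set.mem_inter_iff, Set.mem_Ioo, Set.mem_Iio]
  exact ⟨fun h => ⟨h.1.1, h.2⟩, fun h => ⟨⟨h.1, h.2.trans hu.2⟩, h.2⟩⟩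

theorem lintegral_tupleWeight_Ioo_succ {g : ℕ → ℝ → ℝ≥0∞} (hg : ∀ j, Measurable (g j)) (w : ℕ)
    (x : ℝ) :
    ∫⁻ t, tupleWeight g (w + 1) (Set.Ioo 0 x) t =
      ∫⁻ u in Set.Ioo 0 x, g w u * ∫⁻ t, tupleWeight g w (Set.Ioo 0 u) t := by
  rw [lintegral_tupleWeight_succ hg _ measurableSet_Ioo]
  exact setLIntegral_congr_fun measurableSet_Ioo fun u hu => by
    simp only [Ioo_inter_Iio_of_mem hu]

theorem setLIntegral_Ioo_ofReal_pow {x : ℝ} (hx : 0 ≤ x) (k : ℕ) :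
    ∫⁻ t in Set.Ioo 0 x, ENNReal.ofReal t ^ k =
      ((k + 1 : ℕ) : ℝ≥0∞)⁻¹ * ENNReal.ofReal x ^ (k + 1) := by
  have h : ∫⁻ t in Set.Ioo 0 x, ENNReal.ofReal t ^ k =
      ∫⁻ t in Set.Ioo 0 x, ENNReal.ofReal (t ^ k) :=
    setLIntegral_congr_fun measurableSet_Ioo fun t ht => by
      simp only [ENNReal.ofReal_pow ht.1.le]
  rw [h, ← ofReal_integral_eq_lintegral_ofReal, ← integral_Ioc_eq_integral_Ioo,
    ← intervalIntegral.integral_of_le hx, integral_pow, ← ENNReal.ofReal_pow hx,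
    ← ENNReal.ofReal_natCast, ← ENNReal.ofReal_inv_of_pos (by positivity),
    ← ENNReal.ofReal_mul (by positivity)]
  · congr 1
    push_cast
    simp [div_eq_inv_mul]
  · exact ((continuous_pow k).integrableOn_Icc).mono_set Set.Ioo_subset_Icc_self
  · exact (ae_restrict_mem measurableSet_Ioo).mono fun t ht => pow_nonneg ht.1.le k

theorem setLIntegral_inv_mul_tsum {x : ℝ} (hx : 0 ≤ x) {c : ℕ → ℝ≥0∞} (hc : c 0 = 0) :
    ∫⁻ t in Set.Ioo 0 x, ENNReal.ofReal t⁻¹ * ∑' k, c k * ENNReal.ofReal t ^ k =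
      ∑' k, c k * (k : ℝ≥0∞)⁻¹ * ENNReal.ofReal x ^ k := by
  simp_rw [← ENNReal.tsum_mul_left]
  rw [lintegral_tsum fun k => by fun_prop]
  refine tsum_congr fun k => ?_
  cases k with
  | zero => simp [hc]
  | succ k =>
    rw [mul_assoc, ← setLIntegral_Ioo_ofReal_pow hx, ← lintegral_const_mul _ (by fun_prop)]
    refine setLIntegral_congr_fun measurableSet_Ioo fun t ht => ?_
    have h : ENNReal.ofReal t⁻¹ * ENNReal.ofReal t = 1 := by
      rw [← ENNReal.ofReal_mul (by simpa using ht.1.le), inv_mul_cancel₀ ht.1.ne',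
        ENNReal.ofReal_one]
    calc ENNReal.ofReal t⁻¹ * (c (k + 1) * ENNReal.ofReal t ^ (k + 1))
        = (ENNReal.ofReal t⁻¹ * ENNReal.ofReal t) * (c (k + 1) * ENNReal.ofReal t ^ k) := by ring
      _ = c (k + 1) * ENNReal.ofReal t ^ k := by rw [h, one_mul]

theorem ENNReal.tsum_ite_lt (j : ℕ) (h : ℕ → ℝ≥0∞) :
    ∑' k, (if j < k then h k else 0) = ∑' l, h (j + l + 1) := by
  rw [← Summable.sum_add_tsum_nat_add' (k := j + 1) ENNReal.summable, Finset.sum_eq_zero, zero_add]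
  · refine tsum_congr fun l => ?_
    rw [if_pos (by omega)]
    congr 1
    omega
  · intro k hk
    rw [if_neg (by simp at hk; omega)]

theorem ENNReal.ofReal_one_sub_inv {t : ℝ} (ht : t ∈ Set.Ioo 0 1) :
    ENNReal.ofReal (1 - t)⁻¹ = ∑' l, ENNReal.ofReal t ^ l := by
  rw [ENNReal.tsum_geometric, ENNReal.ofReal_inv_of_pos (by linarith [ht.2]),
    ENNReal.ofReal_sub _ ht.1.le, ENNReal.ofReal_one]

theorem setLIntegral_one_sub_inv_mul_tsum {x : ℝ} (hx : 0 ≤ x) (hx1 : x ≤ 1) (c : ℕ → ℝ≥0∞) :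
    ∫⁻ t in Set.Ioo 0 x, ENNReal.ofReal (1 - t)⁻¹ * ∑' k, c k * ENNReal.ofReal t ^ k =
      ∑' k, (∑ j ∈ Finset.range k, c j) * (k : ℝ≥0∞)⁻¹ * ENNReal.ofReal x ^ k := by
  have hl : ∫⁻ t in Set.Ioo 0 x, ENNReal.ofReal (1 - t)⁻¹ * ∑' k, c k * ENNReal.ofReal t ^ k =
      ∫⁻ t in Set.Ioo 0 x, ∑' j, ∑' l, c j * ENNReal.ofReal t ^ (j + l) :=
    setLIntegral_congr_fun measurableSet_Ioo fun t ht => by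
      simp only [ENNReal.ofReal_one_sub_inv ⟨ht.1, ht.2.trans_le hx1⟩, ← ENNReal.tsum_mul_left,
        ← ENNReal.tsum_mul_right, pow_add]
      exact tsum_congr fun j => tsum_congr fun l => by ring
  have hr (k : ℕ) : (∑ j ∈ Finset.range k, c j) * (k : ℝ≥0∞)⁻¹ * ENNReal.ofReal x ^ k =
      ∑' j, if j < k then c j * ((k : ℝ≥0∞)⁻¹ * ENNReal.ofReal x ^ k) else 0 := by
    rw [tsum_eq_sum (s := Finset.range k) fun j hj => if_neg (by simpa using hj), mul_assoc,
      Finset.sum_mul]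
    exact Finset.sum_congr rfl fun j hj => (if_pos (Finset.mem_range.1 hj)).symm
  simp_rw [hl, hr]
  rw [ENNReal.tsum_comm, lintegral_tsum fun j => by fun_prop]
  refine tsum_congr fun j => ?_
  rw [ENNReal.tsum_ite_lt, lintegral_tsum fun j => by fun_prop]
  refine tsum_congr fun l => ?_
  rw [lintegral_const_mul _ (by fun_prop), setLIntegral_Ioo_ofReal_pow hx]

/-- The summand `k ^ (-n i)` of a multiple zeta value. -/
noncomputable def zetaWeight (n : ℕ → ℕ) (i k : ℕ) : ℝ≥0∞ := (k : ℝ≥0∞)⁻¹ ^ n i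

/-- The truncated multiple zeta value: the sum over `0 < k_1 < ⋯ < k_m < K`. -/
noncomputable def truncatedZeta (n : ℕ → ℕ) (m K : ℕ) : ℝ≥0∞ :=
  ∑' k, tupleWeight (zetaWeight n) m (Set.Ioo 0 K) k

/-- The coefficient of `x ^ k` in the multiple polylogarithm with exponents `n_1, …, n_m`. -/
noncomputable def polylogCoeff (n : ℕ → ℕ) : ℕ → ℕ → ℝ≥0∞
  | 0, k => if k = 0 then 1 else 0
  | m + 1, k => (Set.Ioi 0).indicator (zetaWeight n m) k * truncatedZeta n m k

theorem tsum_tupleWeight_zetaWeight_succ (n : ℕ → ℕ) (m : ℕ) :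
    ∑' k, tupleWeight (zetaWeight n) (m + 1) (Set.Ioi 0) k = ∑' k, polylogCoeff n (m + 1) k :=
  tsum_tupleWeight_succ _ _ _

theorem sum_range_polylogCoeff (n : ℕ → ℕ) (m : ℕ) {k : ℕ} (hk : 0 < k) :
    ∑ j ∈ Finset.range k, polylogCoeff n m j = truncatedZeta n m k := by
  cases m with
  | zero => simp [polylogCoeff, truncatedZeta, tupleWeight_zero, hk]
  | succ m =>
    rw [truncatedZeta, tsum_tupleWeight_succ,
      tsum_eq_sum (s := Finset.range k) fun j hj => by simp_all]
    refine Finset.sum_congr rfl fun j hj => ?_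
    rcases j.eq_zero_or_pos with rfl | hj0
    · simp [polylogCoeff]
    · have hmem : j ∈ Set.Ioo 0 k := ⟨hj0, Finset.mem_range.1 hj⟩
      rw [Ioo_inter_Iio_of_mem hmem, Set.indicator_of_mem hmem, polylogCoeff,
        Set.indicator_of_mem (Set.mem_Ioi.2 hj0), truncatedZeta]

open Classical in
/-- The `j`-th form of the iterated integral: `1 / (1 - t)` if `j` starts a block, `1 / t`
otherwise. -/
noncomputable def blockForm (n : ℕ → ℕ) (j : ℕ) (t : ℝ) : ℝ≥0∞ :=
  if ∃ i, j = ∑ r ∈ Finset.range i, n r then ENNReal.ofReal (1 - t)⁻¹ else ENNReal.ofReal t⁻¹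

theorem measurable_blockForm (n : ℕ → ℕ) (j : ℕ) : Measurable (blockForm n j) := by
  unfold blockForm
  split_ifs <;> fun_prop

theorem blockForm_sum_range (n : ℕ → ℕ) (m : ℕ) (t : ℝ) :
    blockForm n (∑ r ∈ Finset.range m, n r) t = ENNReal.ofReal (1 - t)⁻¹ :=
  if_pos ⟨m, rfl⟩

theorem blockForm_sum_range_add (n : ℕ → ℕ) {m p : ℕ} (hp : p + 1 < n m) (t : ℝ) :
    blockForm n (∑ r ∈ Finset.range m, n r + (p + 1)) t = ENNReal.ofReal t⁻¹ := by
  refine if_neg ?_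
  rintro ⟨i, hi⟩
  have hmono : Monotone fun i => ∑ r ∈ Finset.range i, n r :=
    fun a b hab => Finset.sum_le_sum_of_subset (Finset.range_mono hab)
  rcases le_or_gt i m with h | h
  · have := hmono h
    simp only at this
    omega
  · have := hmono (Nat.succ_le_of_lt h)
    simp only [Finset.sum_range_succ, Nat.succ_eq_add_one] at this
    omega

theorem lintegral_blockForm_block (n : ℕ → ℕ) (m : ℕ)
    (ih : ∀ x ∈ Set.Icc (0 : ℝ) 1,
      ∫⁻ t, tupleWeight (blockForm n) (∑ r ∈ Finset.range m, n r) (Set.Ioo 0 x) t =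
        ∑' k, polylogCoeff n m k * ENNReal.ofReal x ^ k)
    (p : ℕ) (hp : p + 1 ≤ n m) {x : ℝ} (hx : x ∈ Set.Icc (0 : ℝ) 1) :
    ∫⁻ t, tupleWeight (blockForm n) (∑ r ∈ Finset.range m, n r + (p + 1)) (Set.Ioo 0 x) t =
      ∑' k, (Set.Ioi 0).indicator (fun k : ℕ => (k : ℝ≥0∞)⁻¹ ^ (p + 1)) k *
        truncatedZeta n m k * ENNReal.ofReal x ^ k := by
  induction p generalizing x with
  | zero =>
    rw [zero_add, lintegral_tupleWeight_Ioo_succ (measurable_blockForm n)]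
    have : ∫⁻ u in Set.Ioo 0 x, blockForm n (∑ r ∈ Finset.range m, n r) u *
        ∫⁻ t, tupleWeight (blockForm n) (∑ r ∈ Finset.range m, n r) (Set.Ioo 0 u) t =
        ∫⁻ u in Set.Ioo 0 x, ENNReal.ofReal (1 - u)⁻¹ *
          ∑' k, polylogCoeff n m k * ENNReal.ofReal u ^ k :=
      setLIntegral_congr_fun measurableSet_Ioo fun u hu => by
        simp only [blockForm_sum_range, ih u ⟨hu.1.le, hu.2.le.trans hx.2⟩]
    rw [this, setLIntegral_one_sub_inv_mul_tsum hx.1 hx.2]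
    refine tsum_congr fun k => ?_
    rcases k.eq_zero_or_pos with rfl | hk
    · simp
    · rw [sum_range_polylogCoeff n m hk, Set.indicator_of_mem (Set.mem_Ioi.2 hk), pow_one,
        mul_comm (truncatedZeta n m k)]
  | succ p ihp =>
    rw [← add_assoc, lintegral_tupleWeight_Ioo_succ (measurable_blockForm n)]
    have : ∫⁻ u in Set.Ioo 0 x, blockForm n (∑ r ∈ Finset.range m, n r + (p + 1)) u *
        ∫⁻ t, tupleWeight (blockForm n) (∑ r ∈ Finset.range m, n r + (p + 1)) (Set.Ioo 0 u) t =
        ∫⁻ u in Set.Ioo 0 x, ENNReal.ofReal u⁻¹ *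
          ∑' k, (Set.Ioi 0).indicator (fun k : ℕ => (k : ℝ≥0∞)⁻¹ ^ (p + 1)) k *
            truncatedZeta n m k * ENNReal.ofReal u ^ k :=
      setLIntegral_congr_fun measurableSet_Ioo fun u hu => by
        simp only [blockForm_sum_range_add n (show p + 1 < n m by omega),
          ihp (by omega) ⟨hu.1.le, hu.2.le.trans hx.2⟩]
    rw [this, setLIntegral_inv_mul_tsum hx.1 (by simp)]
    refine tsum_congr fun k => ?_
    rcases k.eq_zero_or_pos with rfl | hk
    · simp
    · rw [Set.indicator_of_mem (Set.mem_Ioi.2 hk), Set.indicator_of_mem (Set.mem_Ioi.2 hk)]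
      ring

theorem lintegral_blockForm (n : ℕ → ℕ) (hn : ∀ i, 1 ≤ n i) (m : ℕ) :
    ∀ x ∈ Set.Icc (0 : ℝ) 1,
      ∫⁻ t, tupleWeight (blockForm n) (∑ r ∈ Finset.range m, n r) (Set.Ioo 0 x) t =
        ∑' k, polylogCoeff n m k * ENNReal.ofReal x ^ k := by
  induction m with
  | zero =>
    intro x _
    rw [tsum_eq_single 0 fun k hk => by simp [polylogCoeff, hk]]
    change ∫⁻ t : Fin 0 → ℝ, tupleWeight (blockForm n) 0 (Set.Ioo 0 x) t = _
    simp_rw [tupleWeight_zero]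
    rw [lintegral_one, volume_pi, Measure.pi_of_empty]
    simp [polylogCoeff]
  | succ m ih =>
    intro x hx
    have h := lintegral_blockForm_block n m ih (n m - 1) (by have := hn m; omega) hx
    rw [Nat.sub_add_cancel (hn m)] at h
    rw [Finset.sum_range_succ, h]
    rfl

theorem lintegral_blockForm_eq_tsum (n : ℕ → ℕ) (hn : ∀ i, 1 ≤ n i) {m : ℕ} (hm : 1 ≤ m) :
    ∫⁻ t, tupleWeight (blockForm n) (∑ r ∈ Finset.range m, n r) (Set.Ioo 0 1) t =
      ∑' k, tupleWeight (zetaWeight n) m (Set.Ioi 0) k := by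
  obtain ⟨m, rfl⟩ := Nat.exists_eq_add_of_le' hm
  simp [lintegral_blockForm n hn (m + 1) 1 (by simp), tsum_tupleWeight_zetaWeight_succ]

theorem ENNReal.tsum_fin_fun_prod {α : Type*} (u : α → ℝ≥0∞) (m : ℕ) :
    ∑' k : Fin m → α, ∏ i, u (k i) = (∑' j, u j) ^ m := by
  induction m with
  | zero => simp
  | succ m ih =>
    simp_rw [ENNReal.tsum_fin_succ_fun, Fin.prod_univ_castSucc, Fin.snoc_castSucc, Fin.snoc_last,
      ENNReal.tsum_mul_right, ih, ENNReal.tsum_mul_left, pow_succ]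

theorem prod_inv_pow_le_prod_rpow {m : ℕ} {n k : Fin m → ℕ} (hn : ∀ i, 1 ≤ n i) (hk : ∀ i, 0 < k i)
    {l : Fin m} (hl : 2 ≤ n l) (hkl : ∀ i, k i ≤ k l) :
    ∏ i, ((k i : ℝ) ^ n i)⁻¹ ≤ ∏ i, (k i : ℝ) ^ (-(1 + 1 / m : ℝ)) := by
  have hm : (m : ℝ) ≠ 0 := by
    have := l.pos
    positivity
  have hk' (i : Fin m) : (0 : ℝ) < k i := by exact_mod_cast hk i
  have hdvd : (∏ i, k i) * k l ∣ ∏ i, k i ^ n i := by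
    have : ∏ i, k i ^ n i = (∏ i, k i) * ∏ i, k i ^ (n i - 1) := by
      rw [← Finset.prod_mul_distrib]
      exact Finset.prod_congr rfl fun i _ => by
        rw [← pow_succ', Nat.sub_add_cancel (hn i)]
    rw [this]
    exact mul_dvd_mul_left _ ((dvd_pow_self _ (by omega)).trans
      (Finset.dvd_prod_of_mem (fun i => k i ^ (n i - 1)) (Finset.mem_univ l)))
  have hle : (∏ i, (k i : ℝ)) * k l ≤ ∏ i, (k i : ℝ) ^ n i := by
    exact_mod_cast Nat.le_of_dvd (Finset.prod_pos fun i _ => pow_pos (hk i) _) hdvd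
  have hroot : ∏ i, (k i : ℝ) ^ (1 / m : ℝ) ≤ k l :=
    calc ∏ i, (k i : ℝ) ^ (1 / m : ℝ) ≤ ∏ _i : Fin m, (k l : ℝ) ^ (1 / m : ℝ) :=
          Finset.prod_le_prod (fun i _ => by positivity) fun i _ =>
            Real.rpow_le_rpow (hk' i).le (by exact_mod_cast hkl i) (by positivity)
      _ = k l := by
          rw [Finset.prod_const, Finset.card_univ, Fintype.card_fin, ← Real.rpow_mul_natCast (hk' l).le,
            one_div_mul_cancel hm, Real.rpow_one]
  simp_rw [Real.rpow_neg (Nat.cast_nonneg _)]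
  rw [Finset.prod_inv_distrib, Finset.prod_inv_distrib]
  refine inv_anti₀ (Finset.prod_pos fun i _ => Real.rpow_pos_of_pos (hk' i) _) ?_
  calc ∏ i, (k i : ℝ) ^ (1 + 1 / m : ℝ) = (∏ i, (k i : ℝ)) * ∏ i, (k i : ℝ) ^ (1 / m : ℝ) := by
        rw [← Finset.prod_mul_distrib]
        exact Finset.prod_congr rfl fun i _ => by rw [Real.rpow_add (hk' i), Real.rpow_one]
    _ ≤ (∏ i, (k i : ℝ)) * k l :=
        mul_le_mul_of_nonneg_left hroot (Finset.prod_nonneg fun i _ => (hk' i).le)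
    _ ≤ _ := hle

theorem prod_zetaWeight_eq_ofReal (n : ℕ → ℕ) {m : ℕ} {k : Fin m → ℕ} (hk : ∀ i, 0 < k i) :
    ∏ i : Fin m, zetaWeight n i (k i) = ENNReal.ofReal (∏ i : Fin m, ((k i : ℝ) ^ n i)⁻¹) := by
  rw [ENNReal.ofReal_prod_of_nonneg fun i _ => by positivity]
  refine Finset.prod_congr rfl fun i _ => ?_
  have := hk i
  rw [zetaWeight, ENNReal.ofReal_inv_of_pos (by positivity), ENNReal.ofReal_pow (by positivity),
    ENNReal.ofReal_natCast, ENNReal.inv_pow]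

theorem tsum_tupleWeight_zetaWeight_ne_top (n : ℕ → ℕ) (hn : ∀ i, 1 ≤ n i) {m : ℕ} (hm : 1 ≤ m)
    (hlast : 2 ≤ n (m - 1)) : ∑' k, tupleWeight (zetaWeight n) m (Set.Ioi 0) k ≠ ∞ := by
  set u : ℕ → ℝ≥0∞ := fun k => ENNReal.ofReal ((k : ℝ) ^ (-(1 + 1 / m : ℝ))) with hu
  have hsum : ∑' j, u j ≠ ∞ := by
    refine Summable.tsum_ofReal_ne_top (Real.summable_nat_rpow.2 ?_)
    have : (0 : ℝ) < 1 / m := by positivity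
    linarith
  refine ne_top_of_le_ne_top (ENNReal.pow_ne_top hsum (n := m)) ?_
  rw [← ENNReal.tsum_fin_fun_prod]
  refine ENNReal.tsum_le_tsum <| Set.indicator_le fun k hk => ?_
  have hpos (i : Fin m) : 0 < k i := hk.2 i
  rw [prod_zetaWeight_eq_ofReal n hpos, hu, ← ENNReal.ofReal_prod_of_nonneg fun i _ => by positivity]
  exact ENNReal.ofReal_le_ofReal (prod_inv_pow_le_prod_rpow (n := fun i => n i) (fun i => hn i) hpos
    (l := ⟨m - 1, by omega⟩) hlast fun i => hk.1.monotone (Fin.le_def.2 (by simp; omega)))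

theorem mzv_eq_toReal_tsum (n : ℕ → ℕ) (m : ℕ) :
    mzv m (fun i => n i) = (∑' k, tupleWeight (zetaWeight n) m (Set.Ioi 0) k).toReal := by
  have h : ∑' k, tupleWeight (zetaWeight n) m (Set.Ioi 0) k =
      ∑' k : {k : Fin m → ℕ // StrictMono k ∧ ∀ i, 0 < k i},
        ENNReal.ofReal (∏ i : Fin m, ((k.1 i : ℝ) ^ n i)⁻¹) :=
    (tsum_subtype (increasingTuples m (Set.Ioi 0)) _).symm.trans
      (tsum_congr fun k => prod_zetaWeight_eq_ofReal n k.2.2)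
  rw [h, ENNReal.tsum_toReal_eq fun k => ENNReal.ofReal_ne_top]
  exact tsum_congr fun k => (ENNReal.toReal_ofReal
    (Finset.prod_nonneg fun i _ => by positivity)).symm

theorem ofReal_eq_blockForm (n : ℕ → ℕ) (m : ℕ)
    (f : Fin (∑ r ∈ Finset.range m, n r) → ℝ → ℝ)
    (hf1 : ∀ j : Fin _, ∀ i < m, (j : ℕ) = ∑ r ∈ Finset.range i, n r → f j = fun t => (1 - t)⁻¹)
    (hf2 : ∀ j : Fin _, (∀ i < m, (j : ℕ) ≠ ∑ r ∈ Finset.range i, n r) → f j = fun t => t⁻¹)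
    (j : Fin (∑ r ∈ Finset.range m, n r)) (t : ℝ) :
    ENNReal.ofReal (f j t) = blockForm n j t := by
  by_cases h : ∃ i, (j : ℕ) = ∑ r ∈ Finset.range i, n r
  · obtain ⟨i, hi⟩ := h
    have him : i < m := by
      by_contra hmi
      have := Finset.sum_le_sum_of_subset (f := n) (Finset.range_mono (not_lt.1 hmi))
      have := j.2
      omega
    rw [hf1 j i him hi, hi, blockForm_sum_range]
  · rw [hf2 j fun i _ hi => h ⟨i, hi⟩, blockForm, if_neg h]

theorem integrableOn_and_mzv_eq_setIntegral (n : ℕ → ℕ) (hn : ∀ i, 1 ≤ n i) {m : ℕ} (hm : 1 ≤ m)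
    (hlast : 2 ≤ n (m - 1)) (f : Fin (∑ r ∈ Finset.range m, n r) → ℝ → ℝ)
    (hf1 : ∀ j : Fin _, ∀ i < m, (j : ℕ) = ∑ r ∈ Finset.range i, n r → f j = fun t => (1 - t)⁻¹)
    (hf2 : ∀ j : Fin _, (∀ i < m, (j : ℕ) ≠ ∑ r ∈ Finset.range i, n r) → f j = fun t => t⁻¹) :
    IntegrableOn (fun t => ∏ j, f j (t j)) (increasingTuples _ (Set.Ioo 0 1)) volume ∧
    mzv m (fun i => n i) = ∫ t in increasingTuples _ (Set.Ioo 0 1), ∏ j, f j (t j) := by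
  have hcases (j) : f j = (fun t => (1 - t)⁻¹) ∨ f j = fun t => t⁻¹ := by
    by_cases h : ∃ i < m, (j : ℕ) = ∑ r ∈ Finset.range i, n r
    · obtain ⟨i, him, hi⟩ := h
      exact .inl (hf1 j i him hi)
    · exact .inr (hf2 j fun i him hi => h ⟨i, him, hi⟩)
  have hmeas (j) : Measurable (f j) := by
    rcases hcases j with h | h <;> rw [h] <;> fun_prop
  have hnonneg (j) {x : ℝ} (hx : x ∈ Set.Ioo 0 1) : 0 ≤ f j x := by
    rcases hcases j with h | h <;> rw [h] <;> simp [hx.1.le, hx.2.le]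
  have hS := measurableSet_increasingTuples (∑ r ∈ Finset.range m, n r)
    (measurableSet_Ioo (a := (0 : ℝ)) (b := 1))
  have hprod : Measurable fun t : Fin (∑ r ∈ Finset.range m, n r) → ℝ => ∏ j, f j (t j) :=
    Finset.measurable_fun_prod _ fun j _ => (hmeas j).comp (measurable_pi_apply j)
  have hprod_nonneg : 0 ≤ᵐ[volume.restrict (increasingTuples _ (Set.Ioo 0 1))]
      fun t : Fin (∑ r ∈ Finset.range m, n r) → ℝ => ∏ j, f j (t j) :=
    (ae_restrict_mem hS).mono fun t ht => Finset.prod_nonneg fun j _ => hnonneg j (ht.2 j)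
  have hlint : ∫⁻ t in increasingTuples _ (Set.Ioo 0 1), ENNReal.ofReal (∏ j, f j (t j)) =
      ∑' k, tupleWeight (zetaWeight n) m (Set.Ioi 0) k := by
    rw [← lintegral_blockForm_eq_tsum n hn hm]
    simp only [tupleWeight]
    rw [lintegral_indicator hS]
    refine setLIntegral_congr_fun hS fun t ht => ?_
    simp only [ENNReal.ofReal_prod_of_nonneg fun j _ => hnonneg j (ht.2 j),
      ofReal_eq_blockForm n m f hf1 hf2]
  constructor
  · refine ⟨hprod.aestronglyMeasurable, ?_⟩
    rw [hasFiniteIntegral_iff_ofReal hprod_nonneg, hlint]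
    exact (tsum_tupleWeight_zetaWeight_ne_top n hn hm hlast).lt_top
  · rw [integral_eq_lintegral_of_nonneg_ae hprod_nonneg hprod.aestronglyMeasurable, hlint,
      mzv_eq_toReal_tsum]

theorem sum_filter_lt_eq_sum_range {m : ℕ} (n : ℕ → ℕ) (i : Fin m) :
    ∑ r ∈ Finset.univ.filter (fun r : Fin m => r < i), n r = ∑ r ∈ Finset.range i, n r := by
  refine Finset.sum_bij (fun r _ => (r : ℕ)) ?_ ?_ ?_ ?_
  · intro r hr
    simpa using hr
  · intro r _ s _ h
    exact Fin.ext h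
  · intro r hr
    have hri := Finset.mem_range.1 hr
    exact ⟨⟨r, hri.trans i.2⟩, Finset.mem_filter.2 ⟨Finset.mem_univ _, hri⟩, rfl⟩
  · intros
    rfl

/-- Kontsevich's iterated-integral representation of multiple zeta values:
`ζ(n_1,…,n_m) = ∫_{0<t_1<⋯<t_w<1} ∏_j f_j(t_j) dt`, where `f_j(t) = 1/(1−t)` if `j` starts a
block and `f_j(t) = 1/t` otherwise; moreover the integrand is integrable on the open simplex. -/
theorem stmt15 (m : ℕ) (hm : 1 ≤ m) (n : Fin m → ℕ) (hn : ∀ i, 1 ≤ n i)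
    (hlast : 2 ≤ n ⟨m - 1, by omega⟩)
    (w : ℕ) (hw : w = ∑ i, n i)
    (f : Fin w → ℝ → ℝ)
    (hf1 : ∀ j : Fin w, ∀ i : Fin m,
      (j : ℕ) = ∑ r ∈ Finset.univ.filter (fun r : Fin m => r < i), n r →
        f j = fun t => (1 - t)⁻¹)
    (hf2 : ∀ j : Fin w,
      (∀ i : Fin m, (j : ℕ) ≠ ∑ r ∈ Finset.univ.filter (fun r : Fin m => r < i), n r) →
        f j = fun t => t⁻¹)
    (S : Set (Fin w → ℝ))
    (hS : S = {t : Fin w → ℝ | StrictMono t ∧ ∀ j, t j ∈ Set.Ioo 0 1}) :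
    IntegrableOn (fun t : Fin w → ℝ => ∏ j, f j (t j)) S volume ∧
    mzv m n = ∫ t in S, ∏ j, f j (t j) := by
  obtain ⟨N, hN, rfl⟩ : ∃ N : ℕ → ℕ, (∀ i, 1 ≤ N i) ∧ n = fun i : Fin m => N i := by
    refine ⟨fun i => if h : i < m then n ⟨i, h⟩ else 1, fun i => ?_, by simp⟩
    dsimp only
    split_ifs
    exacts [hn _, le_rfl]
  rw [Fin.sum_univ_eq_sum_range N m] at hw
  subst hw hS
  simp only [sum_filter_lt_eq_sum_range] at hf1 hf2
  exact integrableOn_and_mzv_eq_setIntegral N hN hm hlast f (fun j i hi => hf1 j ⟨i, hi⟩)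
    fun j h => hf2 j fun i => h i i.2
end
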